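/- Let B be an abelian category and A a full abelian subcategory of B that is closed under short exact sequences and closed under subobjects and quotient objects of its objects, let M be a commutative monoid, and let v be an M-valued volume on A. Let f, k : X → Y be morphisms in B such that f is Fredholm with respect to v and k is finite with respect to v. Then the sum f + k (in the additive structure of B) is Fredholm with respect to v and Ind(f + k) = Ind(f) in M. -/

import Mathlib

open CategoryTheory Limits

universe v u

variable {B : Type u} [Category.{v} B] [Abelian B] {M : Type*} [CommMonoid M]

/-- The index of a morphism whose kernel has invertible volume:
`Ind(f) = v(Cok f) · v(Ker f)⁻¹`. -/
noncomputable def fredholmIndex (v : B → M) {X Y : B} (f : X ⟶ Y)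
    (h : IsUnit (v (kernel f))) : M :=
  v (cokernel f) * ↑h.unit⁻¹

section
variable (P : B → Prop) (v : B → M)

/-- A morphism is Fredholm with respect to the volume `v` (defined on the subcategory of
objects satisfying `P`) if its kernel and cokernel lie in the subcategory and have
invertible volume. -/
def IsFredholm {X Y : B} (f : X ⟶ Y) : Prop :=
  P (kernel f) ∧ IsUnit (v (kernel f)) ∧ P (cokernel f) ∧ IsUnit (v (cokernel f))

/-- A morphism is finite with respect to the volume `v` if its image lies in the
subcategory and has invertible volume. -/
def IsFiniteMor {X Y : B} (f : X ⟶ Y) : Prop :=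
  P (image f) ∧ IsUnit (v (image f))

/-- The closure and volume axioms: `P` cuts out a full abelian subcategory closed under
subobjects, quotient objects and short exact sequences, and `v` is an `M`-valued volume
on it. -/
def VolumeAxioms : Prop :=
  (∀ ⦃X Y : B⦄, (X ≅ Y) → P X → P Y) ∧
  (∀ X : B, IsZero X → P X) ∧
  (∀ ⦃X Y : B⦄ (f : X ⟶ Y), Mono f → P Y → P X) ∧
  (∀ ⦃X Y : B⦄ (f : X ⟶ Y), Epi f → P X → P Y) ∧
  (∀ S : ShortComplex B, S.ShortExact → P S.X₁ → P S.X₃ → P S.X₂) ∧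
  (∀ X : B, IsZero X → v X = 1) ∧
  (∀ S : ShortComplex B, S.ShortExact → P S.X₁ → P S.X₂ → P S.X₃ →
    v S.X₂ = v S.X₁ * v S.X₃)
end

/-!
Objects of invertible volume form a Serre class, and the Fredholm morphisms are the isomorphisms
modulo this class, so they have the two-out-of-three property. The exact sequence
`0 ⟶ Ker f ⟶ Ker (f ≫ g) ⟶ Ker g ⟶ Cok f ⟶ Cok (f ≫ g) ⟶ Cok g ⟶ 0` makes the index multiplicative.
The inclusion `j` of `Ker k` is Fredholm, because its cokernel is the image of `k`, and it satisfies
`j ≫ (f + k) = j ≫ f`. Hence `f + k` is Fredholm, and `Ind j * Ind (f + k) = Ind j * Ind f`,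
where `Ind j` is invertible.
-/

/-- The property of lying in the subcategory cut out by `P` and having invertible volume. These are
the objects allowed as kernels and cokernels of Fredholm morphisms and as images of finite ones. -/
def IsFiniteObj (P : B → Prop) (v : B → M) : ObjectProperty B :=
  fun X ↦ P X ∧ IsUnit (v X)

section

variable {P : B → Prop} {v : B → M}

namespace VolumeAxioms

open ZeroObject

theorem isSerreClass (hax : VolumeAxioms P v) : ObjectProperty.IsSerreClass P := by
  obtain ⟨-, hzero, hmono, hepi, hext, -, -⟩ := hax
  exact
    { exists_zero := ⟨0, isZero_zero B, hzero 0 (isZero_zero B)⟩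
      prop_of_mono f hf := hmono f hf
      prop_of_epi f hf := hepi f hf
      prop_X₂_of_shortExact hS := hext _ hS }

theorem volume_eq_one_of_isZero (hax : VolumeAxioms P v) {X : B} (hX : IsZero X) : v X = 1 :=
  hax.2.2.2.2.2.1 X hX

theorem volume_X₂_of_shortExact (hax : VolumeAxioms P v) {S : ShortComplex B}
    (hS : S.ShortExact) (h₂ : P S.X₂) : v S.X₂ = v S.X₁ * v S.X₃ := by
  have := hax.isSerreClass
  exact hax.2.2.2.2.2.2 S hS (ObjectProperty.prop_X₁_of_shortExact P hS h₂) h₂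
    (ObjectProperty.prop_X₃_of_shortExact P hS h₂)

theorem volume_eq_of_mono (hax : VolumeAxioms P v) {X Y : B} (f : X ⟶ Y) [Mono f] (hY : P Y) :
    v Y = v X * v (cokernel f) :=
  hax.volume_X₂_of_shortExact (.mk (ShortComplex.exact_cokernel f)) hY

theorem volume_eq_of_epi (hax : VolumeAxioms P v) {X Y : B} (f : X ⟶ Y) [Epi f] (hX : P X) :
    v X = v (kernel f) * v Y :=
  hax.volume_X₂_of_shortExact (.mk (ShortComplex.exact_kernel f)) hX

theorem volume_eq_of_iso (hax : VolumeAxioms P v) {X Y : B} (e : X ≅ Y) (hX : P X) :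
    v X = v Y := by
  rw [hax.volume_eq_of_epi e.hom hX,
    hax.volume_eq_one_of_isZero (isZero_kernel_of_mono e.hom), one_mul]

theorem isSerreClass_isFiniteObj (hax : VolumeAxioms P v) : (IsFiniteObj P v).IsSerreClass := by
  have := hax.isSerreClass
  exact
    { exists_zero := ⟨0, isZero_zero B, ObjectProperty.prop_zero P, by
        rw [hax.volume_eq_one_of_isZero (isZero_zero B)]
        exact isUnit_one⟩
      prop_of_mono f _ hY := ⟨ObjectProperty.prop_of_mono P f hY.1,
        isUnit_of_mul_isUnit_left (hax.volume_eq_of_mono f hY.1 ▸ hY.2)⟩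
      prop_of_epi f _ hX := ⟨ObjectProperty.prop_of_epi P f hX.1,
        isUnit_of_mul_isUnit_right (hax.volume_eq_of_epi f hX.1 ▸ hX.2)⟩
      prop_X₂_of_shortExact hS h₁ h₃ := by
        have h₂ := ObjectProperty.prop_X₂_of_shortExact P hS h₁.1 h₃.1
        exact ⟨h₂, hax.volume_X₂_of_shortExact hS h₂ ▸ h₁.2.mul h₃.2⟩ }

theorem volume_eq_kernel_mul_image (hax : VolumeAxioms P v) {X Y : B} (f : X ⟶ Y) (hX : P X) :
    v X = v (kernel f) * v (image f) := by
  have := hax.isSerreClass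
  have h_coimage : P (Abelian.coimage f) := ObjectProperty.prop_of_epi P (Abelian.coimage.π f) hX
  rw [← hax.volume_eq_of_iso (Abelian.coimageIsoImage' f) h_coimage]
  exact hax.volume_eq_of_mono (kernel.ι f) hX

theorem volume_image_of_mono (hax : VolumeAxioms P v) {X Y : B} (f : X ⟶ Y) [Mono f] (hX : P X) :
    v (image f) = v X :=
  (hax.volume_eq_of_iso (imageMonoIsoSource f).symm hX).symm

theorem volume_image_of_epi (hax : VolumeAxioms P v) {X Y : B} (f : X ⟶ Y) [Epi f] (hY : P Y) :
    v (image f) = v Y :=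
  have : Epi (image.ι f) := epi_image_of_epi f
  have : IsIso (image.ι f) := isIso_of_mono_of_epi (image.ι f)
  (hax.volume_eq_of_iso (asIso (image.ι f)).symm hY).symm

theorem volume_X₂_of_exact (hax : VolumeAxioms P v) {S : ShortComplex B} (hS : S.Exact)
    (h₂ : P S.X₂) : v S.X₂ = v (image S.f) * v (image S.g) := by
  have := hax.isSerreClass
  have image_f_iso_kernel_g : image S.f ≅ kernel S.g :=
    hS.isLimitImage'.conePointUniqueUpToIso (limit.isLimit _)
  rw [hax.volume_eq_kernel_mul_image S.g h₂, hax.volume_eq_of_iso image_f_iso_kernel_g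
    (ObjectProperty.prop_of_mono P (image.ι S.f) h₂)]

theorem volume_alternating_of_exact (hax : VolumeAxioms P v) {S : ComposableArrows B 5}
    (hS : S.Exact) [Mono (S.map' 0 1)] [Epi (S.map' 4 5)]
    (h₁ : P (S.obj' 1)) (h₂ : P (S.obj' 2)) (h₃ : P (S.obj' 3)) (h₄ : P (S.obj' 4)) :
    v (S.obj' 0) * v (S.obj' 2) * v (S.obj' 4) = v (S.obj' 1) * v (S.obj' 3) * v (S.obj' 5) := by
  have := hax.isSerreClass
  have h₀ : P (S.obj' 0) := ObjectProperty.prop_of_mono P (S.map' 0 1 _ _) h₁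
  have h₅ : P (S.obj' 5) := ObjectProperty.prop_of_epi P (S.map' 4 5 _ _) h₄
  have e₀ : v (image (S.map' 0 1)) = v (S.obj' 0) := hax.volume_image_of_mono _ h₀
  have e₁ : v (S.obj' 1) = v (image (S.map' 0 1)) * v (image (S.map' 1 2)) :=
    hax.volume_X₂_of_exact (hS.exact 0) h₁
  have e₂ : v (S.obj' 2) = v (image (S.map' 1 2)) * v (image (S.map' 2 3)) :=
    hax.volume_X₂_of_exact (hS.exact 1) h₂
  have e₃ : v (S.obj' 3) = v (image (S.map' 2 3)) * v (image (S.map' 3 4)) :=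
    hax.volume_X₂_of_exact (hS.exact 2) h₃
  have e₄ : v (S.obj' 4) = v (image (S.map' 3 4)) * v (image (S.map' 4 5)) :=
    hax.volume_X₂_of_exact (hS.exact 3) h₄
  have e₅ : v (image (S.map' 4 5)) = v (S.obj' 5) := hax.volume_image_of_epi _ h₅
  rw [← e₀, e₁, e₂, e₃, e₄, ← e₅]
  ac_rfl

end VolumeAxioms

theorem isFredholm_iff_isoModSerre [(IsFiniteObj P v).IsSerreClass] {X Y : B} {f : X ⟶ Y} :
    IsFredholm P v f ↔ (IsFiniteObj P v).isoModSerre f :=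
  and_assoc.symm

theorem fredholmIndex_eq_iff {X Y : B} {f : X ⟶ Y} (h : IsUnit (v (kernel f))) {a : M} :
    fredholmIndex v f h = a ↔ v (cokernel f) = a * v (kernel f) :=
  Units.mul_inv_eq_iff_eq_mul h.unit

theorem fredholmIndex_mul_volume_kernel {X Y : B} {f : X ⟶ Y} (h : IsUnit (v (kernel f))) :
    fredholmIndex v f h * v (kernel f) = v (cokernel f) :=
  ((fredholmIndex_eq_iff h).1 rfl).symm

namespace IsFredholm

variable {X Y Z : B} {f : X ⟶ Y} {g : Y ⟶ Z}

theorem isUnit_fredholmIndex (hf : IsFredholm P v f) : IsUnit (fredholmIndex v f hf.2.1) :=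
  hf.2.2.2.mul (Units.isUnit _)

theorem comp (hax : VolumeAxioms P v) (hf : IsFredholm P v f) (hg : IsFredholm P v g) :
    IsFredholm P v (f ≫ g) := by
  have := hax.isSerreClass_isFiniteObj
  rw [isFredholm_iff_isoModSerre] at hf hg ⊢
  exact (IsFiniteObj P v).isoModSerre.comp_mem f g hf hg

theorem of_precomp (hax : VolumeAxioms P v) (hf : IsFredholm P v f)
    (hfg : IsFredholm P v (f ≫ g)) : IsFredholm P v g := by
  have := hax.isSerreClass_isFiniteObj
  rw [isFredholm_iff_isoModSerre] at hf hfg ⊢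
  exact (IsFiniteObj P v).isoModSerre.of_precomp f g hf hfg

theorem fredholmIndex_comp (hax : VolumeAxioms P v) (hf : IsFredholm P v f)
    (hg : IsFredholm P v g) :
    fredholmIndex v (f ≫ g) (hf.comp hax hg).2.1 =
      fredholmIndex v f hf.2.1 * fredholmIndex v g hg.2.1 := by
  have hfg := hf.comp hax hg
  have alternating : v (kernel f) * v (kernel g) * v (cokernel (f ≫ g)) =
      v (kernel (f ≫ g)) * v (cokernel f) * v (cokernel g) :=
    hax.volume_alternating_of_exact (kernelCokernelCompSequence_exact f g)
      hfg.1 hg.1 hf.2.2.1 hfg.2.2.1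
  rw [fredholmIndex_eq_iff]
  apply (hf.2.1.mul hg.2.1).mul_left_cancel
  calc v (kernel f) * v (kernel g) * v (cokernel (f ≫ g))
      = v (kernel (f ≫ g)) * v (cokernel f) * v (cokernel g) := alternating
    _ = v (kernel (f ≫ g)) * (fredholmIndex v f hf.2.1 * v (kernel f)) *
          (fredholmIndex v g hg.2.1 * v (kernel g)) := by
        rw [fredholmIndex_mul_volume_kernel, fredholmIndex_mul_volume_kernel]
    _ = v (kernel f) * v (kernel g) *
          (fredholmIndex v f hf.2.1 * fredholmIndex v g hg.2.1 * v (kernel (f ≫ g))) := by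
        ac_rfl

theorem exists_fredholmIndex_eq_of_comp_eq (hax : VolumeAxioms P v) {g' : Y ⟶ Z}
    (hf : IsFredholm P v f) (hg : IsFredholm P v g) (w : f ≫ g' = f ≫ g) :
    ∃ hg' : IsFredholm P v g', fredholmIndex v g' hg'.2.1 = fredholmIndex v g hg.2.1 := by
  have hg' : IsFredholm P v g' := hf.of_precomp hax (w ▸ hf.comp hax hg)
  refine ⟨hg', hf.isUnit_fredholmIndex.mul_left_cancel ?_⟩
  rw [← fredholmIndex_comp hax hf hg', ← fredholmIndex_comp hax hf hg]
  simp only [w]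

end IsFredholm

theorem IsFiniteMor.isFredholm_kernel_ι (hax : VolumeAxioms P v) {X Y : B} {k : X ⟶ Y}
    (hk : IsFiniteMor P v k) : IsFredholm P v (kernel.ι k) := by
  have := hax.isSerreClass_isFiniteObj
  have finite_coimage : IsFiniteObj P v (Abelian.coimage k) :=
    (IsFiniteObj P v).prop_of_iso (Abelian.coimageIsoImage' k).symm hk
  exact isFredholm_iff_isoModSerre.2
    ((IsFiniteObj P v).isoModSerre_of_mono (kernel.ι k) finite_coimage)

end

/-- The Fredholm property and the index are invariant under finite
perturbations: if `f` is Fredholm and `k` is finite with respect to the volume `v`, then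
`f + k` is Fredholm and `Ind(f + k) = Ind(f)`. -/
theorem fredholm_index_invariant_under_finite_perturbation
    (P : B → Prop) (v : B → M) (hax : VolumeAxioms P v)
    {X Y : B} (f k : X ⟶ Y)
    (hf : IsFredholm P v f) (hk : IsFiniteMor P v k) :
    ∃ hfk : IsFredholm P v (f + k),
      fredholmIndex v (f + k) hfk.2.1 = fredholmIndex v f hf.2.1 := by
  have h_comp : kernel.ι k ≫ (f + k) = kernel.ι k ≫ f := by
    rw [Preadditive.comp_add, kernel.condition, add_zero]
  exact (hk.isFredholm_kernel_ι hax).exists_fredholmIndex_eq_of_comp_eq hax hf h_comp
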